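/- arXiv:2604.04888 — 3 statements merged into one kernel-verified Lean document; each statement's English description precedes it below -/
import Mathlib

section
/- Fix an integer d ≥ 2 and set r = d mod 2. For every m ∈ {0, …, d−1}, ∑_{j=0}^{d−1} exp(−iπ(j+m)((j+m)+r)/d) · exp(iπ j(j+r)/d) = d · δ_{m,0}. -/
open Complex

noncomputable section

/-!
The exponent of the Chu sequence is quadratic, so in the quotient `c(j + m) / c(j)` the terms
`j²` and `r j` cancel and `c(m)` times the `j`-th power of the `d`-th root of unity
`exp(-2πim/d)` remains. Summing over `j` gives a full geometric sum, which vanishes unless that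
root of unity is `1`, that is, unless `d ∣ m`.
-/

lemma geom_sum_eq_ite_of_pow_eq_one {R : Type*} [Ring R] [NoZeroDivisors R] [DecidableEq R]
    {z : R} {n : ℕ} (hz : z ^ n = 1) :
    ∑ j ∈ Finset.range n, z ^ j = if z = 1 then (n : R) else 0 := by
  split_ifs with h
  · simp [h]
  · have hmul : (∑ j ∈ Finset.range n, z ^ j) * (z - 1) = 0 := by
      rw [geom_sum_mul, hz, sub_self]
    exact (mul_eq_zero.mp hmul).resolve_right (sub_ne_zero.mpr h)

lemma geom_sum_zpow_of_isPrimitiveRoot {K : Type*} [Field K] {ζ : K} {n : ℕ}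
    (hζ : IsPrimitiveRoot ζ n) (k : ℤ) :
    ∑ j ∈ Finset.range n, (ζ ^ k) ^ j = if (n : ℤ) ∣ k then (n : K) else 0 := by
  classical
  have hpow : (ζ ^ k) ^ n = 1 := by
    rw [← zpow_natCast, zpow_comm, zpow_natCast, hζ.pow_eq_one, one_zpow]
  simp only [geom_sum_eq_ite_of_pow_eq_one hpow, hζ.zpow_eq_one_iff_dvd]

/-- The Chu sequence `c(k) = exp(-iπ k(k+r)/d)`, with `k` ranging over all integers and an
arbitrary complex parameter `r`. For real `r` its values have modulus `1`, so that `(c k)⁻¹` is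
the complex conjugate of `c k`. -/
def chuSequence (d : ℕ) (r : ℂ) (k : ℤ) : ℂ :=
  exp (-(Real.pi * I * k * (k + r) / d))

lemma inv_chuSequence (d : ℕ) (r : ℂ) (k : ℤ) :
    (chuSequence d r k)⁻¹ = exp (Real.pi * I * k * (k + r) / d) := by
  rw [chuSequence, ← exp_neg, neg_neg]

lemma chuSequence_add_mul_inv (d : ℕ) (r : ℂ) (j m : ℤ) :
    chuSequence d r (j + m) * (chuSequence d r j)⁻¹ =
      chuSequence d r m * (exp (2 * Real.pi * I / d) ^ (-m)) ^ j := by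
  rw [inv_chuSequence, chuSequence, chuSequence, ← exp_int_mul, ← exp_int_mul, ← exp_add,
    ← exp_add]
  congr 1
  push_cast
  ring

theorem chu_autocorrelation_general {d : ℕ} (hd : d ≠ 0) (r : ℂ) (m : ℤ) :
    ∑ j ∈ Finset.range d, chuSequence d r (j + m) * (chuSequence d r j)⁻¹ =
      if (d : ℤ) ∣ m then d * chuSequence d r m else 0 := by
  have hζ := isPrimitiveRoot_exp d hd
  calc ∑ j ∈ Finset.range d, chuSequence d r (j + m) * (chuSequence d r j)⁻¹
      = chuSequence d r m *
          ∑ j ∈ Finset.range d, (exp (2 * Real.pi * I / d) ^ (-m)) ^ j := by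
        simp only [chuSequence_add_mul_inv, zpow_natCast, Finset.mul_sum]
    _ = if (d : ℤ) ∣ m then d * chuSequence d r m else 0 := by
        rw [geom_sum_zpow_of_isPrimitiveRoot hζ, mul_ite, mul_zero, mul_comm]
        simp only [dvd_neg]

/-- Zero-autocorrelation of the Chu sequence `c(k) = exp(−iπ k(k+r)/d)`, `r = d mod 2`:
`∑_{j<d} c(j+m) conj(c(j)) = d·δ_{m,0}` for `m ∈ {0,…,d−1}`. -/
theorem chu_autocorrelation (d : ℕ) (hd : 2 ≤ d) (m : ℕ) (hm : m < d) :
    ∑ j ∈ Finset.range d,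
        Complex.exp (-(Real.pi * Complex.I * ((j + m : ℕ) : ℂ) *
            (((j + m : ℕ) : ℂ) + ((d % 2 : ℕ) : ℂ)) / d)) *
          Complex.exp (Real.pi * Complex.I * (j : ℂ) * ((j : ℂ) + ((d % 2 : ℕ) : ℂ)) / d)
      = d * (if m = 0 then 1 else 0) := by
  have hsum := chu_autocorrelation_general (by omega : d ≠ 0) (d % 2 : ℕ) m
  simp only [inv_chuSequence, Int.natCast_dvd_natCast] at hsum
  obtain rfl | hm0 := m.eq_zero_or_pos
  · simpa [chuSequence] using hsum
  · simpa [chuSequence, Nat.not_dvd_of_pos_of_lt hm0 hm, hm0.ne'] using hsum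
end
end

section
/- Fix an integer d ≥ 2 and set r = d mod 2 and c(k) = exp(−iπ k(k+r)/d). Let P be any unitary complex square matrix (of any finite size) satisfying P^d = I. Then the operator V(P) = (1/√d) ∑_{k=0}^{d−1} c(k) P^k is unitary, i.e. V(P) · V(P)† = I. -/
open Matrix Complex

noncomputable section

/-- The Chu sequence `c(k) = exp(−iπ k(k + (d mod 2))/d)`. -/
def chu (d k : ℕ) : ℂ :=
  Complex.exp (-(Real.pi * Complex.I * (k : ℂ) * ((k : ℂ) + ((d % 2 : ℕ) : ℂ)) / d))

/-!
Expanding `V(P) V(P)†` and collecting powers of `P` gives `(1/d) ∑ₘ A(m) Pᵐ`, where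
`A(m) = ∑ₖ c(k + m) c(k)*` is the periodic autocorrelation of `c`; collecting is possible because
`k ↦ c(k) Pᵏ` has period `d`. The Chu sequence is quadratic, `c(k + m) = c(k) c(m) ζ⁻ᵏᵐ` with
`ζ = exp(2πi/d)`, so `A(m)` is a multiple of `∑ₖ (ζ⁻ᵐ)ᵏ`, which vanishes unless `d ∣ m`. Only the
term `A(0) = d` survives.
-/

theorem sum_range_add_of_periodic {M : Type*} [AddCommMonoid M] {f : ℕ → M} {d : ℕ}
    (hf : Function.Periodic f d) (k : ℕ) :
    ∑ j ∈ Finset.range d, f (k + j) = ∑ j ∈ Finset.range d, f j := by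
  calc
    _ = ∑ j ∈ Finset.Ico k (k + d), f (j % d) := by
      simp only [hf.map_mod_nat, Finset.sum_Ico_eq_sum_range, add_tsub_cancel_left]
    _ = ∑ j ∈ Finset.range d, f j := by
      rw [← Finset.sum_image (Nat.mod_injOn_Ico k d), Nat.image_Ico_mod]

theorem geom_sum_eq_zero_of_pow_eq_one {R : Type*} [Ring R] [NoZeroDivisors R] {x : R} {n : ℕ}
    (hx : x ≠ 1) (hxn : x ^ n = 1) : ∑ k ∈ Finset.range n, x ^ k = 0 := by
  have h : (x - 1) * ∑ k ∈ Finset.range n, x ^ k = 0 := by rw [mul_geom_sum, hxn, sub_self]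
  exact (mul_eq_zero.1 h).resolve_left (sub_ne_zero.2 hx)

/-- The periodic autocorrelation of a sequence of period `d` at shift `m`. Sequences on `ℤ/d` are
encoded as `d`-periodic functions on `ℕ`, so that no reduction of indices is needed. -/
def periodicAutocorrelation {R : Type*} [NonUnitalNonAssocSemiring R] [Star R] (d : ℕ)
    (a : ℕ → R) (m : ℕ) : R :=
  ∑ k ∈ Finset.range d, a (k + m) * star (a k)

/-- A perfect polyphase sequence of period `d`: its entries are unimodular and its periodic
autocorrelation vanishes at every nonzero shift modulo `d`. This is the property of the Chu
sequence that makes `V(P)` unitary. -/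
structure IsPerfectPolyphase {R : Type*} [NonAssocSemiring R] [Star R] (d : ℕ)
    (a : ℕ → R) : Prop where
  periodic : Function.Periodic a d
  mul_star_self : ∀ k, a k * star (a k) = 1
  autocorrelation_eq_zero : ∀ m, ¬ d ∣ m → periodicAutocorrelation d a m = 0

theorem IsPerfectPolyphase.autocorrelation_zero {R : Type*} [NonAssocSemiring R] [Star R] {d : ℕ}
    {a : ℕ → R} (ha : IsPerfectPolyphase d a) : periodicAutocorrelation d a 0 = d := by
  simp [periodicAutocorrelation, ha.mul_star_self]

theorem isPerfectPolyphase_of_quadratic {R : Type*} [CommRing R] [NoZeroDivisors R] [Star R]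
    {d : ℕ} {a : ℕ → R} {ω : R} (hω : IsPrimitiveRoot ω d)
    (ha_quadratic : ∀ k m, a (k + m) = a k * a m * ω ^ (k * m)) (had : a d = 1)
    (ha_unimodular : ∀ k, a k * star (a k) = 1) : IsPerfectPolyphase d a where
  periodic k := by rw [ha_quadratic, had, mul_comm k d, pow_mul, hω.pow_eq_one, one_pow, mul_one,
    mul_one]
  mul_star_self := ha_unimodular
  autocorrelation_eq_zero m hm := by
    have hterm (k : ℕ) : a (k + m) * star (a k) = a m * (ω ^ m) ^ k := by
      rw [ha_quadratic, ← pow_mul, mul_comm m k]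
      linear_combination a m * ω ^ (k * m) * ha_unimodular k
    have hne : ω ^ m ≠ 1 := fun h ↦ hm (hω.dvd_of_pow_eq_one m h)
    have hpow : (ω ^ m) ^ d = 1 := by rw [pow_right_comm, hω.pow_eq_one, one_pow]
    simp only [periodicAutocorrelation, hterm]
    rw [← Finset.mul_sum, geom_sum_eq_zero_of_pow_eq_one hne hpow, mul_zero]

section StarAlgebra

variable {R A : Type*} [CommSemiring R] [StarRing R] [Semiring A] [StarRing A] [Algebra R A]
  [StarModule R A] {d : ℕ} {a : ℕ → R} {p : A}

theorem isStarNormal_sum_smul_pow (s : Finset ℕ) (a : ℕ → R) (p : A) [IsStarNormal p] :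
    IsStarNormal (∑ k ∈ s, a k • p ^ k) where
  star_comm_self := by
    simp only [star_sum, star_smul, star_pow]
    exact .sum_left _ _ _ fun j _ ↦ .sum_right _ _ _ fun k _ ↦
      (((star_comm_self (x := p)).pow_pow j k).smul_left _).smul_right _

theorem sum_smul_pow_mul_star_self_of_periodic (ha : Function.Periodic a d) (hp : p ∈ unitary A)
    (hpd : p ^ d = 1) :
    (∑ k ∈ Finset.range d, a k • p ^ k) * star (∑ k ∈ Finset.range d, a k • p ^ k) =
      ∑ m ∈ Finset.range d, periodicAutocorrelation d a m • p ^ m := by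
  have hperiodic : Function.Periodic (fun k ↦ a k • p ^ k) d := fun k ↦ by
    simp only [ha k, pow_add, hpd, mul_one]
  have hterm (k m : ℕ) : a (k + m) • p ^ (k + m) * star (a k • p ^ k) =
      (a (k + m) * star (a k)) • p ^ m := by
    rw [star_smul, smul_mul_smul_comm, add_comm k m, pow_add, mul_assoc,
      Unitary.mul_star_self_of_mem (pow_mem hp k), mul_one]
  calc
    _ = ∑ k ∈ Finset.range d, (∑ m ∈ Finset.range d, a m • p ^ m) * star (a k • p ^ k) := by
      rw [star_sum, Finset.mul_sum]
    _ = ∑ k ∈ Finset.range d, ∑ m ∈ Finset.range d, (a (k + m) * star (a k)) • p ^ m := by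
      refine Finset.sum_congr rfl fun k _ ↦ ?_
      rw [← sum_range_add_of_periodic hperiodic k, Finset.sum_mul]
      simp only [hterm]
    _ = ∑ m ∈ Finset.range d, periodicAutocorrelation d a m • p ^ m := by
      rw [Finset.sum_comm]
      simp only [periodicAutocorrelation, Finset.sum_smul]

theorem IsPerfectPolyphase.sum_smul_pow_mul_star_self (ha : IsPerfectPolyphase d a)
    (hp : p ∈ unitary A) (hpd : p ^ d = 1) :
    (∑ k ∈ Finset.range d, a k • p ^ k) * star (∑ k ∈ Finset.range d, a k • p ^ k) = d := by
  rw [sum_smul_pow_mul_star_self_of_periodic ha.periodic hp hpd, Finset.sum_eq_single 0]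
  · rw [ha.autocorrelation_zero, pow_zero, Nat.cast_smul_eq_nsmul, nsmul_one]
  · intro m hm hm0
    rw [ha.autocorrelation_eq_zero m (Nat.not_dvd_of_pos_of_lt (Nat.pos_of_ne_zero hm0)
      (Finset.mem_range.1 hm)), zero_smul]
  · intro hd
    obtain rfl : d = 0 := by simpa using hd
    simp [periodicAutocorrelation]

end StarAlgebra

theorem IsPerfectPolyphase.inv_sqrt_smul_sum_mem_unitary {A : Type*} [Semiring A] [StarRing A]
    [Algebra ℂ A] [StarModule ℂ A] {d : ℕ} {a : ℕ → ℂ} {p : A} (ha : IsPerfectPolyphase d a)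
    (hd : d ≠ 0) (hp : p ∈ unitary A) (hpd : p ^ d = 1) :
    ((Real.sqrt d : ℂ))⁻¹ • ∑ k ∈ Finset.range d, a k • p ^ k ∈ unitary A := by
  have hp_normal := isStarNormal_of_mem_unitary hp
  have hsum_normal := isStarNormal_sum_smul_pow (Finset.range d) a p
  have hscalar : (Real.sqrt d : ℂ)⁻¹ * star (Real.sqrt d : ℂ)⁻¹ * d = 1 := by
    have hsqrt : (Real.sqrt d : ℂ) ^ 2 = d := by
      exact_mod_cast Real.sq_sqrt (Nat.cast_nonneg d)
    have hd' : (d : ℂ) ≠ 0 := Nat.cast_ne_zero.2 hd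
    rw [star_inv₀, star_def, conj_ofReal, ← mul_inv, ← sq, hsqrt, inv_mul_cancel₀ hd']
  have hmul_star : (((Real.sqrt d : ℂ))⁻¹ • ∑ k ∈ Finset.range d, a k • p ^ k) *
      star (((Real.sqrt d : ℂ))⁻¹ • ∑ k ∈ Finset.range d, a k • p ^ k) = 1 := by
    rw [star_smul, smul_mul_smul_comm, ha.sum_smul_pow_mul_star_self hp hpd,
      ← map_natCast (algebraMap ℂ A) d, Algebra.smul_def, ← map_mul, hscalar, map_one]
  refine Unitary.mem_iff.2 ⟨?_, hmul_star⟩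
  rwa [star_comm_self']

section Chu

variable {d : ℕ}

theorem chu_add (hd : d ≠ 0) (k m : ℕ) :
    chu d (k + m) = chu d k * chu d m * (exp (2 * Real.pi * I / d))⁻¹ ^ (k * m) := by
  have hd' : (d : ℂ) ≠ 0 := Nat.cast_ne_zero.2 hd
  simp only [chu, ← exp_neg, ← exp_nat_mul, ← exp_add]
  congr 1
  push_cast
  field_simp
  ring

theorem norm_chu (d k : ℕ) : ‖chu d k‖ = 1 := by
  have h : chu d k = exp ((-(Real.pi * k * (k + (d % 2 : ℕ)) / d) : ℝ) * I) := by
    rw [chu]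
    push_cast
    ring_nf
  rw [h, norm_exp_ofReal_mul_I]

theorem chu_self (hd : d ≠ 0) : chu d d = 1 := by
  have hd' : (d : ℂ) ≠ 0 := Nat.cast_ne_zero.2 hd
  -- The shift by `d % 2` in the sequence is there to make `d + d % 2` even.
  obtain ⟨q, hq⟩ : ∃ q, d + d % 2 = 2 * q := ⟨(d + d % 2) / 2, by lia⟩
  have hq' : (d : ℂ) + (d % 2 : ℕ) = 2 * q := by exact_mod_cast hq
  rw [chu, hq', exp_eq_one_iff]
  refine ⟨-q, ?_⟩
  push_cast
  field_simp

theorem isPerfectPolyphase_chu (hd : d ≠ 0) : IsPerfectPolyphase d (chu d) :=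
  isPerfectPolyphase_of_quadratic (isPrimitiveRoot_exp d hd).inv (chu_add hd) (chu_self hd)
    fun k ↦ by rw [star_def, mul_conj', norm_chu, ofReal_one, one_pow]

end Chu

theorem V_unitary_general {A : Type*} [Semiring A] [StarRing A] [Algebra ℂ A] [StarModule ℂ A]
    {d : ℕ} (hd : d ≠ 0) {p : A} (hp : p ∈ unitary A) (hpd : p ^ d = 1) :
    ((Real.sqrt d : ℂ))⁻¹ • ∑ k ∈ Finset.range d, chu d k • p ^ k ∈ unitary A :=
  (isPerfectPolyphase_chu hd).inv_sqrt_smul_sum_mem_unitary hd hp hpd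

/-- For any unitary `P` with `P^d = 1`, the operator
`V(P) = (1/√d) ∑_{k<d} c(k) P^k` built from the Chu sequence is unitary. -/
theorem V_unitary {ι : Type*} [Fintype ι] [DecidableEq ι] (d : ℕ) (hd : 2 ≤ d)
    (P : Matrix ι ι ℂ) (hP : P ∈ Matrix.unitaryGroup ι ℂ) (hPd : P ^ d = 1) :
    (((Real.sqrt d : ℂ))⁻¹ • ∑ k ∈ Finset.range d, chu d k • P ^ k) *
        (((Real.sqrt d : ℂ))⁻¹ • ∑ k ∈ Finset.range d, chu d k • P ^ k)ᴴ
      = 1 :=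
  Unitary.mul_star_self_of_mem (V_unitary_general (by lia) hP hPd)
end
end

section
/- For d = 2 and every integer n ≥ 1, the encryption operator satisfies the identity (1/2) ∑_{k,l=0}^{1} c_{k,l} (X₂^k Z₂^l)^{⊗(n+1)} = (1/2) ( I₂^{⊗(n+1)} + (−i) Z₂^{⊗(n+1)} + (−i) X₂^{⊗(n+1)} + (−1)(−i)^{n+1} Y₂^{⊗(n+1)} ), where c_{0,0} = 1, c_{0,1} = c_{1,0} = −i, c_{1,1} = −1 are the d = 2 Chu coefficients c_{k,l} = exp(−iπk²/2)·exp(−iπl²/2), and Y₂ = i·X₂Z₂ is the Pauli Y matrix. -/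
open Matrix Complex

noncomputable section

/-- Pauli X on ℂ². -/
def X2 : Matrix (Fin 2) (Fin 2) ℂ := !![0, 1; 1, 0]

/-- Pauli Z on ℂ². -/
def Z2 : Matrix (Fin 2) (Fin 2) ℂ := !![1, 0; 0, -1]

/-- Pauli Y on ℂ², `Y₂ = i·X₂Z₂`. -/
def Y2 : Matrix (Fin 2) (Fin 2) ℂ := !![0, -Complex.I; Complex.I, 0]

/-- The `m`-fold tensor (Kronecker) power of a `d×d` matrix, as a matrix
indexed by `Fin m → Fin d`: entries `(f,g) ↦ ∏ i, M (f i) (g i)`. -/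
def tpow (d m : ℕ) (M : Matrix (Fin d) (Fin d) ℂ) :
    Matrix (Fin m → Fin d) (Fin m → Fin d) ℂ :=
  Matrix.of fun f g => ∏ i, M (f i) (g i)

/-- The `d = 2` Chu coefficient `c_{k,l}`, which weights the Weyl operator `X₂^k Z₂^l` in the
encryption operator. -/
def chuCoeff (k l : ℕ) : ℂ :=
  exp (-(Real.pi * I * (k : ℂ) ^ 2 / 2)) * exp (-(Real.pi * I * (l : ℂ) ^ 2 / 2))

lemma exp_neg_pi_mul_I_div_two : exp (-(Real.pi * I / 2)) = -I := by
  rw [mul_div_right_comm, ← neg_mul, ← neg_div, exp_neg_pi_div_two_mul_I]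

lemma chuCoeff_comm (k l : ℕ) : chuCoeff k l = chuCoeff l k :=
  mul_comm _ _

lemma chuCoeff_zero_zero : chuCoeff 0 0 = 1 := by
  simp [chuCoeff]

lemma chuCoeff_zero_one : chuCoeff 0 1 = -I := by
  simp [chuCoeff, exp_neg_pi_mul_I_div_two]

lemma chuCoeff_one_zero : chuCoeff 1 0 = -I := by
  rw [chuCoeff_comm, chuCoeff_zero_one]

lemma chuCoeff_one_one : chuCoeff 1 1 = -1 := by
  simp [chuCoeff, exp_neg_pi_mul_I_div_two]

lemma X2_mul_Z2 : X2 * Z2 = (-I) • Y2 := by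
  simp [X2, Z2, Y2]

lemma tpow_smul (d m : ℕ) (c : ℂ) (M : Matrix (Fin d) (Fin d) ℂ) :
    tpow d m (c • M) = c ^ m • tpow d m M := by
  ext f g
  simp [tpow, Finset.prod_mul_distrib]

lemma tpow_X2_mul_Z2 (m : ℕ) : tpow 2 m (X2 * Z2) = (-I) ^ m • tpow 2 m Y2 := by
  rw [X2_mul_Z2, tpow_smul]

/-- At `d = 2` the Chu-sequence encryption operator reduces to the Yamaguchi–Kempf
encryption operator:
`(1/2) ∑_{k,l<2} c_{k,l} (X₂^k Z₂^l)^{⊗(n+1)}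
  = (1/2)(I^{⊗(n+1)} − i Z₂^{⊗(n+1)} − i X₂^{⊗(n+1)} + (−1)(−i)^{n+1} Y₂^{⊗(n+1)})`,
where `c_{k,l} = exp(−iπk²/2)·exp(−iπl²/2)`. -/
theorem Uenc_two_dim (n : ℕ) (hn : 1 ≤ n) :
    (2 : ℂ)⁻¹ • (∑ k ∈ Finset.range 2, ∑ l ∈ Finset.range 2,
        (Complex.exp (-(Real.pi * Complex.I * (k : ℂ) ^ 2 / 2)) *
            Complex.exp (-(Real.pi * Complex.I * (l : ℂ) ^ 2 / 2))) •
          tpow 2 (n + 1) (X2 ^ k * Z2 ^ l))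
      = (2 : ℂ)⁻¹ • (tpow 2 (n + 1) 1 + (-Complex.I) • tpow 2 (n + 1) Z2 +
          (-Complex.I) • tpow 2 (n + 1) X2 +
          ((-1) * (-Complex.I) ^ (n + 1)) • tpow 2 (n + 1) Y2) := by
  change (2 : ℂ)⁻¹ • (∑ k ∈ Finset.range 2, ∑ l ∈ Finset.range 2,
    chuCoeff k l • tpow 2 (n + 1) (X2 ^ k * Z2 ^ l)) = _
  simp only [Finset.sum_range_succ, Finset.sum_range_zero, zero_add, pow_zero, pow_one, one_mul,
    mul_one]
  rw [chuCoeff_zero_zero, chuCoeff_zero_one, chuCoeff_one_zero, chuCoeff_one_one,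
    tpow_X2_mul_Z2, one_smul, smul_smul, ← add_assoc]
end
end
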